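/- arXiv:1806.08590 — 2 statements merged into one kernel-verified Lean document; each statement's English description precedes it below -/
import Mathlib

section
/- Let F₂ = ⟨a,b⟩, fix n > 101, let w = a b a² b² ⋯ aⁿ bⁿ, and set w₀ = w, w₁ = ξχ(w), w₂ = ξ(w), w₃ = χ(w), w₄ = τ(w), w₅ = τξχ(w), w₆ = τξ(w), w₇ = τχ(w), and v_i = w_i⁻¹ for 0 ≤ i ≤ 7. Then for every ρ ∈ Fr₊(φ,ψ) and every z ∈ {w₀,v₀,…,w₇,v₇}, the cyclically reduced length satisfies ‖ρ(z)‖ ≥ (n(n−1)/2 − 2n)·(|ρ(a)| + |ρ(b)|). -/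
open MeasureTheory

namespace IRSPaper


/-! ## Basic setup: the space of subgroups, invariant random subgroups -/

/-- The conjugation action of a group on its space of subgroups: `g • H = gHg⁻¹`. -/
def conjSub {G : Type*} [Group G] (g : G) (H : Subgroup G) : Subgroup G :=
  Subgroup.map ((MulAut.conj g).toMonoidHom) H

/-- The topology on the space of subgroups of `G`, induced from the product topology
on `G → Bool` (i.e. the topology of `2^G`). -/
noncomputable instance instTopSub (G : Type*) [Group G] : TopologicalSpace (Subgroup G) :=
  TopologicalSpace.induced
    (fun (H : Subgroup G) (g : G) => @decide (g ∈ H) (Classical.dec _)) inferInstance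

/-- The Borel σ-algebra on the space of subgroups. -/
noncomputable instance instMeasSub (G : Type*) [Group G] : MeasurableSpace (Subgroup G) :=
  borel _

instance instBorelSub (G : Type*) [Group G] : BorelSpace (Subgroup G) := ⟨rfl⟩

/-- An invariant random subgroup: a Borel probability measure on `Sub(G)` which is invariant
under the conjugation action of `G`. -/
def IsIRS {G : Type*} [Group G] (θ : Measure (Subgroup G)) : Prop :=
  IsProbabilityMeasure θ ∧ ∀ g : G, Measure.map (conjSub g) θ = θ

/-- The basic set `N_F = {H ∈ Sub(G) : F ⊆ H}`. -/
def NSet {G : Type*} [Group G] (F : Set G) : Set (Subgroup G) :=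
  {H : Subgroup G | F ⊆ (H : Set G)}

/-- For `Γ ≤ Δ` and `S ⊆ Δ`, the set of subgroups of `Γ` containing every element of `Γ`
whose image in `Δ` lies in `S`.  When `S = t⁻¹Ft ⊆ Γ`, this is exactly the basic set
`N_{t⁻¹Ft}^Γ ⊆ Sub(Γ)`. -/
def NpullSet {Δ : Type*} [Group Δ] (Γ : Subgroup Δ) (S : Set Δ) : Set (Subgroup ↥Γ) :=
  {Λ : Subgroup ↥Γ | ∀ x : ↥Γ, (x : Δ) ∈ S → x ∈ Λ}

/-- `T` is a transversal for the left cosets `Δ/Γ`: each left coset `dΓ` contains exactly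
one element of `T`. -/
def IsLeftTransversal {Δ : Type*} [Group Δ] (Γ : Subgroup Δ) (T : Set Δ) : Prop :=
  ∀ d : Δ, ∃! t : Δ, t ∈ T ∧ d⁻¹ * t ∈ Γ

/-- The defining property of the co-induced invariant random subgroup
`ν = CIND_Γ^Δ(θ)` (with respect to the transversal `T`):  for every finite `F ⊆ Δ`,
`ν(N_F) = 0` if `F ⊄ core_Δ(Γ)` and `ν(N_F) = ∏_{t ∈ T} θ(N_{t⁻¹Ft}^Γ)` if `F ⊆ core_Δ(Γ)`. -/
def CindSpec {Δ : Type*} [Group Δ] (Γ : Subgroup Δ) (T : Set Δ)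
    (θ : Measure (Subgroup ↥Γ)) (ν : Measure (Subgroup Δ)) : Prop :=
  ∀ F : Finset Δ,
    (¬ (F : Set Δ) ⊆ (Γ.normalCore : Set Δ) → ν (NSet (F : Set Δ)) = 0) ∧
    ((F : Set Δ) ⊆ (Γ.normalCore : Set Δ) →
      ν (NSet (F : Set Δ)) =
        ∏' t : T, θ (NpullSet Γ ((fun d => (t : Δ)⁻¹ * d * (t : Δ)) '' (F : Set Δ))))

/-- Ergodicity of a (not necessarily probability-) measure-preserving action given by
an explicit family of maps: every invariant measurable set is null or conull. -/
def ErgodicAct {G α : Type*} [MeasurableSpace α] (act : G → α → α) (μ : Measure α) : Prop :=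
  ∀ s : Set α, MeasurableSet s → (∀ g : G, act g ⁻¹' s = s) → μ s = 0 ∨ μ sᶜ = 0

/-- Weak mixing of an action: the diagonal action on the square is ergodic. -/
def WeaklyMixingAct {G α : Type*} [MeasurableSpace α] (act : G → α → α) (μ : Measure α) : Prop :=
  ErgodicAct (fun (g : G) (p : α × α) => (act g p.1, act g p.2)) (μ.prod μ)

/-- A measure is non-atomic (has no atoms) if every singleton is null. -/
def NonAtomicMeasure {α : Type*} [MeasurableSpace α] (μ : Measure α) : Prop :=
  ∀ x : α, μ {x} = 0

/-- The kernel of an IRS `θ` of `Γ`: the set of `γ ∈ Γ` with `θ(N_γ) = 1`.  (For a probability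
measure this set is a subgroup; taking `Subgroup.closure` makes it a `Subgroup` on the nose.) -/
def kerIRS {Δ : Type*} [Group Δ] (Γ : Subgroup Δ) (θ : Measure (Subgroup ↥Γ)) : Subgroup ↥Γ :=
  Subgroup.closure {x : ↥Γ | θ {Λ : Subgroup ↥Γ | x ∈ Λ} = 1}

/-- `core_Δ(ker(θ))`, viewed as a subgroup of `Δ`. -/
def coreKer {Δ : Type*} [Group Δ] (Γ : Subgroup Δ) (θ : Measure (Subgroup ↥Γ)) : Subgroup Δ :=
  ((kerIRS Γ θ).map Γ.subtype).normalCore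

/-! ## The free group `F₂`, small cancellation notions -/

/-- The free group on two generators. -/
abbrev F2 : Type := FreeGroup Bool

/-- The first generator `a` of `F₂`. -/
def genA : F2 := FreeGroup.of true

/-- The second generator `b` of `F₂`. -/
def genB : F2 := FreeGroup.of false

/-- The length `|x|` of the reduced word representing `x`. -/
def flen (x : F2) : ℕ := x.toWord.length

/-- `x` is cyclically reduced iff it has minimal length in its conjugacy class. -/
def CyclRed (x : F2) : Prop := ∀ g : F2, flen x ≤ flen (g * x * g⁻¹)

/-- The length `‖x‖` of the cyclically reduced word conjugate to `x`. -/
noncomputable def cyclen (x : F2) : ℕ := sInf (Set.range fun g : F2 => flen (g * x * g⁻¹))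

/-- `u` is an initial segment (prefix) of the reduced word of `x`. -/
def IsInitSeg (u x : F2) : Prop := ∃ v : F2, x = u * v ∧ flen x = flen u + flen v

/-- `S̃`: the set of all cyclically reduced cyclic conjugates of the words in `S` and of their
inverses.  (The cyclically reduced cyclic conjugates of a word `s` are exactly the cyclically
reduced elements of the conjugacy class of `s`.) -/
def tildeSet (S : Set F2) : Set F2 :=
  {y : F2 | CyclRed y ∧ ∃ s ∈ S, IsConj s y ∨ IsConj s⁻¹ y}

/-- The `C'(1/6)` small cancellation property for a set of words `S ⊆ F₂`. -/
def C'sixth (S : Set F2) : Prop :=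
  ∀ x ∈ tildeSet S, ∀ y ∈ tildeSet S, x ≠ y →
    ∀ u : F2, IsInitSeg u x → IsInitSeg u y → 6 * flen u < min (flen x) (flen y)

/-- The word `w = a b a² b² ⋯ aⁿ bⁿ`. -/
def wordW (n : ℕ) : F2 :=
  ((List.range n).map (fun i => genA ^ (i + 1) * genB ^ (i + 1))).prod

/-- The group of inner automorphisms of `F₂`, as a subgroup of `Aut(F₂)`;
this is the image of `F₂` in `Aut(F₂)`, identified with `F₂` itself. -/
def innerF2 : Subgroup (MulAut F2) := (MulAut.conj : F2 →* MulAut F2).range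

/-!
Call a place where a word passes from a positive to a negative letter a descent. Under
`x ↦ x y` a reduced word undergoes cancellation only in its subwords `x y⁻¹` and `y x⁻¹`, that is at
descents, each time losing one pair `y y⁻¹`, and the number of descents does not increase. Hence, by
induction on a positive automorphism `ρ`, the reduced length of `ρ(u)` falls short of the total
length of the images of the letters of `u` by at most `2 (|ρ(a)| + |ρ(b)|)` per descent of `u`.

Up to inversion every `z` in question is `g h g² h² ⋯ gⁿ hⁿ` for letters `g`, `h` over the two
generators: each generator occurs `n (n + 1) / 2` times, and `z ^ k` is reduced with at most `k n`
descents. Since `|ρ(z) ^ k|` exceeds `k` times the length of any fixed conjugate of `ρ(z)` by at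
most a constant, letting `k` grow bounds that length from below.
-/

section Words

variable {α : Type*}

/-- The total weight of a word whose letters `c` and `c⁻¹` both weigh `w c`. -/
def weight (w : α → ℕ) (L : List (α × Bool)) : ℕ :=
  (L.map fun l => w l.1).sum

/-- The number of places where a word passes from a positive to a negative letter, when it is
read after a letter of sign `s`. -/
def descents : Bool → List (α × Bool) → ℕ
  | _, [] => 0
  | s, l :: L => (s && !l.2).toNat + descents l.2 L

@[simp]
lemma weight_nil (w : α → ℕ) : weight w [] = 0 := rfl

@[simp]
lemma weight_cons (w : α → ℕ) (l : α × Bool) (L : List (α × Bool)) :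
    weight w (l :: L) = w l.1 + weight w L := by
  simp [weight]

@[simp]
lemma weight_append (w : α → ℕ) (K L : List (α × Bool)) :
    weight w (K ++ L) = weight w K + weight w L := by
  simp [weight]

@[simp]
lemma weight_replicate (w : α → ℕ) (m : ℕ) (l : α × Bool) :
    weight w (List.replicate m l) = m * w l.1 := by
  simp [weight]

lemma weight_flatten_replicate (w : α → ℕ) (k : ℕ) (L : List (α × Bool)) :
    weight w (List.replicate k L).flatten = k * weight w L := by
  simp [weight, List.map_flatten, List.sum_flatten]

lemma descents_le_descents_true (s : Bool) (L : List (α × Bool)) :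
    descents s L ≤ descents true L := by
  cases L <;> cases s <;> simp [descents]

lemma descents_true_le_succ (L : List (α × Bool)) : descents true L ≤ descents false L + 1 := by
  rcases L with _ | ⟨⟨c, s⟩, L⟩
  · simp [descents]
  · cases s <;> simp [descents, add_comm]

lemma descents_append_le (s : Bool) (K L : List (α × Bool)) :
    descents s (K ++ L) ≤ descents s K + descents true L := by
  induction K generalizing s with
  | nil => simpa [descents] using descents_le_descents_true s L
  | cons l K ih => simpa [descents, add_assoc] using ih l.2

lemma descents_replicate_le (s : Bool) (m : ℕ) (l : α × Bool) :
    descents s (List.replicate m l) ≤ (s && !l.2).toNat := by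
  induction m generalizing s with
  | zero => simp [descents]
  | succ m ih => simpa [List.replicate_succ, descents] using ih l.2

lemma descents_replicate_succ_append (s : Bool) (m : ℕ) (l : α × Bool) (L : List (α × Bool)) :
    descents s (List.replicate (m + 1) l ++ L) = descents s (l :: L) := by
  induction m generalizing s with
  | zero => rfl
  | succ m ih =>
    rw [List.replicate_succ, List.cons_append, descents, ih]
    simp [descents]

lemma descents_flatten_replicate_le (k : ℕ) (L : List (α × Bool)) :
    descents true (List.replicate k L).flatten ≤ k * descents true L := by
  induction k with
  | zero => simp [descents]
  | succ k ih =>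
    rw [List.replicate_succ, List.flatten_cons, add_one_mul, add_comm (k * _)]
    exact (descents_append_le true L _).trans (Nat.add_le_add_left ih _)

lemma isCyclicallyReduced_of_forall_mem {L : List (α × Bool)}
    (hL : ∀ l ∈ L, ∀ m ∈ L, l.1 = m.1 → l.2 = m.2) : FreeGroup.IsCyclicallyReduced L :=
  ⟨(List.pairwise_of_forall_mem_list hL).isChain, fun l hl m hm =>
    hL l (List.mem_of_getLast? hl) m (List.mem_of_head? hm)⟩

lemma mk_replicate (m : ℕ) (l : α × Bool) :
    FreeGroup.mk (List.replicate m l) = FreeGroup.mk [l] ^ m := by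
  simp [FreeGroup.pow_mk]

end Words

section Norm

variable {α : Type*} [DecidableEq α]

lemma norm_pow_le (x : FreeGroup α) (k : ℕ) : (x ^ k).norm ≤ k * x.norm := by
  induction k with
  | zero => simp
  | succ k ih =>
    rw [pow_succ, add_one_mul]
    exact (FreeGroup.norm_mul_le _ _).trans (Nat.add_le_add_right ih _)

lemma norm_pow_le_norm_conj (x g : FreeGroup α) (k : ℕ) :
    (x ^ k).norm ≤ 2 * g.norm + k * (g * x * g⁻¹).norm := by
  have conj_back : x ^ k = g⁻¹ * (g * x * g⁻¹) ^ k * g := by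
    rw [conj_pow]; group
  calc (x ^ k).norm
      ≤ g⁻¹.norm + ((g * x * g⁻¹) ^ k).norm + g.norm := by
        rw [conj_back]
        exact (FreeGroup.norm_mul_le _ _).trans
          (Nat.add_le_add_right (FreeGroup.norm_mul_le _ _) _)
    _ ≤ 2 * g.norm + k * (g * x * g⁻¹).norm := by
        have := norm_pow_le (g * x * g⁻¹) k
        rw [FreeGroup.norm_inv_eq]
        omega

lemma le_norm_conj_add_of_forall_pow {x : FreeGroup α} {N D : ℕ}
    (h : ∀ k, k * N ≤ (x ^ k).norm + k * D) (g : FreeGroup α) :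
    N ≤ (g * x * g⁻¹).norm + D := by
  by_contra! hlt
  set k := 2 * g.norm + 1
  have lower : k * N ≤ 2 * g.norm + k * (g * x * g⁻¹).norm + k * D :=
    (h k).trans (Nat.add_le_add_right (norm_pow_le_norm_conj x g k) _)
  have upper : k * ((g * x * g⁻¹).norm + D + 1) ≤ k * N := Nat.mul_le_mul_left k hlt
  rw [mul_add, mul_add] at upper
  omega

end Norm

section Transvection

variable {α : Type*} [DecidableEq α] {x y : α}

/-- The endomorphism of a free group sending the generator `x` to `x * y` and fixing all other
generators. -/
def transvection (x y : α) : FreeGroup α →* FreeGroup α :=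
  FreeGroup.lift fun c => if c = x then FreeGroup.of x * FreeGroup.of y else FreeGroup.of c

/-- The reduced word representing the image of a letter under `transvection x y`. -/
def transvectLetter (x y : α) : α × Bool → List (α × Bool)
  | (c, true) => if c = x then [(x, true), (y, true)] else [(c, true)]
  | (c, false) => if c = x then [(y, false), (x, false)] else [(c, false)]

/-- The reduced word representing the image of a reduced word under `transvection x y`: the only
cancellations are those in `x y⁻¹ ↦ (x y) y⁻¹ = x` and `y x⁻¹ ↦ y (y⁻¹ x⁻¹) = x⁻¹`. -/
def transvectWord (x y : α) : List (α × Bool) → List (α × Bool)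
  | [] => []
  | [l] => transvectLetter x y l
  | l :: m :: L =>
    if l = (x, true) ∧ m = (y, false) then (x, true) :: transvectWord x y L
    else if l = (y, true) ∧ m = (x, false) then (x, false) :: transvectWord x y L
    else transvectLetter x y l ++ transvectWord x y (m :: L)

lemma weight_transvectLetter (w : α → ℕ) (l : α × Bool) :
    weight w (transvectLetter x y l) = (w + Pi.single x (w y) : α → ℕ) l.1 := by
  obtain ⟨c, s⟩ := l
  by_cases hc : c = x <;> cases s <;> simp [transvectLetter, hc, add_comm]

lemma descents_transvectLetter_append (s : Bool) (l : α × Bool) (L : List (α × Bool)) :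
    descents s (transvectLetter x y l ++ L) = descents s (l :: L) := by
  obtain ⟨c, t⟩ := l
  by_cases hc : c = x <;> cases t <;> simp [transvectLetter, hc, descents]

lemma mk_transvectLetter (l : α × Bool) :
    FreeGroup.mk (transvectLetter x y l) = transvection x y (FreeGroup.mk [l]) := by
  obtain ⟨c, s⟩ := l
  by_cases hc : c = x <;> cases s <;>
    simp [transvectLetter, transvection, hc, FreeGroup.of, FreeGroup.mul_mk, FreeGroup.inv_mk,
      FreeGroup.invRev]

lemma isReduced_transvectLetter (l : α × Bool) :
    FreeGroup.IsReduced (transvectLetter x y l) := by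
  obtain ⟨c, s⟩ := l
  by_cases hc : c = x <;> cases s <;> simp [transvectLetter, hc]

lemma transvection_mk_cons (l : α × Bool) (L : List (α × Bool)) :
    transvection x y (FreeGroup.mk (l :: L)) =
      FreeGroup.mk (transvectLetter x y l) * transvection x y (FreeGroup.mk L) := by
  rw [mk_transvectLetter, ← map_mul, FreeGroup.mul_mk, List.singleton_append]

lemma mk_transvectWord (hxy : x ≠ y) (L : List (α × Bool)) :
    FreeGroup.mk (transvectWord x y L) = transvection x y (FreeGroup.mk L) := by
  induction L using transvectWord.induct x y with
  | case1 => simp [transvectWord, ← FreeGroup.one_eq_mk]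
  | case2 l => simpa [transvectWord] using mk_transvectLetter l
  | case3 l m L h ih =>
    obtain ⟨rfl, rfl⟩ := h
    rw [transvectWord, if_pos ⟨rfl, rfl⟩, transvection_mk_cons, transvection_mk_cons, ← ih]
    simp only [transvectLetter, if_neg hxy.symm, if_true, FreeGroup.mul_mk]
    exact FreeGroup.Red.exact.2 ⟨_, .refl, .single (.not (L₁ := [(x, true)]) (b := true))⟩
  | case4 l m L h h' ih =>
    obtain ⟨rfl, rfl⟩ := h'
    rw [transvectWord, if_neg h, if_pos ⟨rfl, rfl⟩, transvection_mk_cons, transvection_mk_cons,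
      ← ih]
    simp only [transvectLetter, if_neg hxy.symm, if_true, FreeGroup.mul_mk]
    exact FreeGroup.Red.exact.2 ⟨_, .refl, .single (.not (L₁ := []) (b := true))⟩
  | case5 l m L h h' ih =>
    rw [transvectWord, if_neg h, if_neg h', ← FreeGroup.mul_mk, ih, ← transvection_mk_cons]

lemma exists_head_of_mem_head_transvectWord (hxy : x ≠ y) {L : List (α × Bool)} {e : α × Bool}
    (he : e ∈ (transvectWord x y L).head?) :
    ∃ m ∈ L.head?, m ≠ (x, false) ∧ e = m ∨ m = (x, false) ∧ e = (y, false) ∨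
      m = (y, true) ∧ e = (x, false) := by
  rcases L with _ | ⟨⟨c, s⟩, L⟩
  · simp [transvectWord] at he
  · refine ⟨(c, s), rfl, ?_⟩
    cases L <;> cases s <;> by_cases hc : c = x <;> grind [transvectWord, transvectLetter]

lemma isReduced_transvectWord (hxy : x ≠ y) {L : List (α × Bool)} (hL : FreeGroup.IsReduced L) :
    FreeGroup.IsReduced (transvectWord x y L) := by
  induction L using transvectWord.induct x y with
  | case1 => simp [transvectWord]
  | case2 l => simpa [transvectWord] using isReduced_transvectLetter l
  | case3 l m L h ih =>
    obtain ⟨rfl, rfl⟩ := h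
    obtain ⟨-, hmL⟩ := FreeGroup.isReduced_cons_cons.1 hL
    obtain ⟨hm, hL'⟩ := List.isChain_cons.1 hmL
    rw [transvectWord, if_pos ⟨rfl, rfl⟩]
    refine List.isChain_cons.2 ⟨fun e he => ?_, ih hL'⟩
    obtain ⟨k, hk, hke⟩ := exists_head_of_mem_head_transvectWord hxy he
    grind
  | case4 l m L h h' ih =>
    obtain ⟨rfl, rfl⟩ := h'
    obtain ⟨-, hmL⟩ := FreeGroup.isReduced_cons_cons.1 hL
    obtain ⟨hm, hL'⟩ := List.isChain_cons.1 hmL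
    rw [transvectWord, if_neg h, if_pos ⟨rfl, rfl⟩]
    refine List.isChain_cons.2 ⟨fun e he => ?_, ih hL'⟩
    obtain ⟨k, hk, hke⟩ := exists_head_of_mem_head_transvectWord hxy he
    grind
  | case5 l m L h h' ih =>
    obtain ⟨hlm, hmL⟩ := FreeGroup.isReduced_cons_cons.1 hL
    rw [transvectWord, if_neg h, if_neg h']
    refine List.isChain_append.2 ⟨isReduced_transvectLetter l, ih hmL, fun d hd e he => ?_⟩
    obtain ⟨k, hk, hke⟩ := exists_head_of_mem_head_transvectWord hxy he
    obtain ⟨c, s⟩ := l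
    cases s <;> by_cases hc : c = x <;> simp only [transvectLetter, hc] at hd <;> grind

lemma descents_transvectWord_le (s : Bool) (L : List (α × Bool)) :
    descents s (transvectWord x y L) ≤ descents s L := by
  induction L using transvectWord.induct x y generalizing s with
  | case1 => simp [transvectWord]
  | case2 l =>
    simpa [transvectWord] using (descents_transvectLetter_append s l []).le
  | case3 l m L h ih =>
    obtain ⟨rfl, rfl⟩ := h
    have := (ih true).trans (descents_true_le_succ L)
    rw [transvectWord, if_pos ⟨rfl, rfl⟩]
    simp only [descents, Bool.not_true, Bool.and_false, Bool.toNat_false, Bool.not_false,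
      Bool.and_self, Bool.toNat_true]
    omega
  | case4 l m L h h' ih =>
    obtain ⟨rfl, rfl⟩ := h'
    rw [transvectWord, if_neg h, if_pos ⟨rfl, rfl⟩]
    have := ih false
    have := s.toNat_le
    simp only [descents, Bool.not_true, Bool.and_false, Bool.toNat_false, Bool.not_false,
      Bool.and_self, Bool.and_true, Bool.toNat_true]
    omega
  | case5 l m L h h' ih =>
    rw [transvectWord, if_neg h, if_neg h', descents_transvectLetter_append, descents, descents]
    exact Nat.add_le_add_left (ih _) _

lemma weight_le_weight_transvectWord_add (hxy : x ≠ y) (w : α → ℕ) (s : Bool)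
    (L : List (α × Bool)) :
    weight (w + Pi.single x (w y)) L ≤ weight w (transvectWord x y L) + 2 * w y * descents s L := by
  induction L using transvectWord.induct x y generalizing s with
  | case1 => simp [transvectWord]
  | case2 l => simp [transvectWord, weight_transvectLetter]
  | case3 l m L h ih =>
    obtain ⟨rfl, rfl⟩ := h
    have := ih false
    rw [transvectWord, if_pos ⟨rfl, rfl⟩]
    simp only [weight_cons, Pi.add_apply, Pi.single_eq_same, Pi.single_eq_of_ne hxy.symm, descents,
      Bool.not_true, Bool.and_false, Bool.toNat_false, Bool.not_false, Bool.and_self,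
      Bool.toNat_true, mul_add] at this ⊢
    omega
  | case4 l m L h h' ih =>
    obtain ⟨rfl, rfl⟩ := h'
    rw [transvectWord, if_neg h, if_pos ⟨rfl, rfl⟩]
    have := ih false
    simp only [weight_cons, Pi.add_apply, Pi.single_eq_same, Pi.single_eq_of_ne hxy.symm, descents,
      Bool.not_true, Bool.and_false, Bool.toNat_false, Bool.not_false, Bool.and_self,
      Bool.toNat_true, mul_add] at this ⊢
    omega
  | case5 l m L h h' ih =>
    have := ih l.2
    rw [transvectWord, if_neg h, if_neg h', weight_append, weight_transvectLetter, weight_cons,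
      descents, mul_add]
    omega

end Transvection

section BoundedCancellation

variable {α β : Type*} [Fintype α] [DecidableEq β]

/-- The length of the image under `ρ` of a reduced word falls short of the total length of the
images of its letters only at the descents of the word, by at most `2 * ∑ c, |ρ c|` at each. -/
def BoundedCancellation (ρ : FreeGroup α →* FreeGroup β) : Prop :=
  ∀ L, FreeGroup.IsReduced L →
    weight (fun c => (ρ (FreeGroup.of c)).norm) L ≤
      (ρ (FreeGroup.mk L)).norm + 2 * (∑ c, (ρ (FreeGroup.of c)).norm) * descents true L

lemma boundedCancellation_id [DecidableEq α] :
    BoundedCancellation (MonoidHom.id (FreeGroup α)) := by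
  intro L hL
  simp [weight, FreeGroup.norm, hL.reduce_eq]

namespace BoundedCancellation

variable {ρ : FreeGroup α →* FreeGroup β}

lemma norm_map_of_mul_of (hρ : BoundedCancellation ρ) (x y : α) :
    (ρ (FreeGroup.of x * FreeGroup.of y)).norm =
      (ρ (FreeGroup.of x)).norm + (ρ (FreeGroup.of y)).norm := by
  refine le_antisymm (by simpa using FreeGroup.norm_mul_le _ _) ?_
  have hred : FreeGroup.IsReduced [(x, true), (y, true)] := by simp
  have hmk : FreeGroup.mk [(x, true), (y, true)] = FreeGroup.of x * FreeGroup.of y := rfl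
  simpa [descents, hmk] using hρ _ hred

lemma norm_comp_transvection_of [DecidableEq α] (hρ : BoundedCancellation ρ) (x y c : α) :
    (ρ.comp (transvection x y) (FreeGroup.of c)).norm =
      (ρ (FreeGroup.of c)).norm + (Pi.single x (ρ (FreeGroup.of y)).norm : α → ℕ) c := by
  by_cases hc : c = x
  · subst hc
    simpa [transvection] using hρ.norm_map_of_mul_of c y
  · simp [transvection, hc]

lemma comp_transvection [DecidableEq α] (hρ : BoundedCancellation ρ) {x y : α} (hxy : x ≠ y) :
    BoundedCancellation (ρ.comp (transvection x y)) := by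
  intro L hL
  simp only [hρ.norm_comp_transvection_of]
  set w : α → ℕ := fun c => (ρ (FreeGroup.of c)).norm
  have total : ∑ c, (w c + (Pi.single x (w y) : α → ℕ) c) = ∑ c, w c + w y := by
    simp [Finset.sum_add_distrib]
  calc weight (w + Pi.single x (w y)) L
      ≤ weight w (transvectWord x y L) + 2 * w y * descents true L :=
        weight_le_weight_transvectWord_add hxy w true L
    _ ≤ (ρ (FreeGroup.mk (transvectWord x y L))).norm +
          2 * (∑ c, w c) * descents true (transvectWord x y L) + 2 * w y * descents true L :=
        Nat.add_le_add_right (hρ _ (isReduced_transvectWord hxy hL)) _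
    _ ≤ (ρ (FreeGroup.mk (transvectWord x y L))).norm +
          2 * (∑ c, w c) * descents true L + 2 * w y * descents true L := by
        gcongr
        exact descents_transvectWord_le true L
    _ = (ρ.comp (transvection x y) (FreeGroup.mk L)).norm +
          2 * (∑ c, (w c + (Pi.single x (w y) : α → ℕ) c)) * descents true L := by
        rw [total, mk_transvectWord hxy, MonoidHom.comp_apply]
        ring

lemma weight_le_norm_conj_add (hρ : BoundedCancellation ρ) {L : List (α × Bool)}
    (hL : FreeGroup.IsCyclicallyReduced L) (g : FreeGroup β) :
    weight (fun c => (ρ (FreeGroup.of c)).norm) L ≤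
      (g * ρ (FreeGroup.mk L) * g⁻¹).norm +
        2 * (∑ c, (ρ (FreeGroup.of c)).norm) * descents true L := by
  refine le_norm_conj_add_of_forall_pow (fun k => ?_) g
  rw [← weight_flatten_replicate, ← map_pow, FreeGroup.pow_mk, mul_left_comm]
  refine (hρ _ (hL.flatten_replicate k).isReduced).trans ?_
  gcongr
  exact descents_flatten_replicate_le k L

end BoundedCancellation

end BoundedCancellation

section BlockWords

/-- The word `g h g² h² ⋯ gⁿ hⁿ` in the letters `g` and `h`. -/
def blockWord {α : Type*} (g h : α × Bool) (n : ℕ) : List (α × Bool) :=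
  (List.range n).flatMap fun i => List.replicate (i + 1) g ++ List.replicate (i + 1) h

/-- The product `u v u² v² ⋯ uⁿ vⁿ` in a group. -/
def blockProd {G : Type*} [Group G] (u v : G) (n : ℕ) : G :=
  ((List.range n).map fun i => u ^ (i + 1) * v ^ (i + 1)).prod

lemma map_blockProd {G H F : Type*} [Group G] [Group H] [FunLike F G H] [MonoidHomClass F G H]
    (f : F) (u v : G) (n : ℕ) : f (blockProd u v n) = blockProd (f u) (f v) n := by
  simp [blockProd, map_list_prod, Function.comp_def]

variable {α : Type*} (g h : α × Bool) (n : ℕ)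

lemma blockWord_succ : blockWord g h (n + 1) =
    blockWord g h n ++ (List.replicate (n + 1) g ++ List.replicate (n + 1) h) := by
  simp [blockWord, List.range_succ]

lemma mk_blockWord : FreeGroup.mk (blockWord g h n) =
    blockProd (FreeGroup.mk [g]) (FreeGroup.mk [h]) n := by
  induction n with
  | zero => simp [blockWord, blockProd, ← FreeGroup.one_eq_mk]
  | succ n ih =>
    rw [blockWord_succ, ← FreeGroup.mul_mk, ← FreeGroup.mul_mk, mk_replicate, mk_replicate, ih]
    simp [blockProd, List.range_succ]

lemma descents_blockWord_le : descents true (blockWord g h n) ≤ n := by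
  induction n with
  | zero => simp [blockWord, descents]
  | succ n ih =>
    have block_le : descents true (List.replicate (n + 1) g ++ List.replicate (n + 1) h) ≤ 1 := by
      rw [descents_replicate_succ_append, descents]
      have := descents_replicate_le g.2 (n + 1) h
      cases hg : g.2 <;> cases hh : h.2 <;> simp_all
    rw [blockWord_succ]
    exact (descents_append_le _ _ _).trans (Nat.add_le_add ih block_le)

lemma two_mul_weight_blockWord (w : α → ℕ) :
    2 * weight w (blockWord g h n) = n * (n + 1) * (w g.1 + w h.1) := by
  induction n with
  | zero => simp [blockWord]
  | succ n ih =>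
    simp only [blockWord_succ, weight_append, weight_replicate, mul_add, ih]
    ring

variable {g h} in
lemma isCyclicallyReduced_blockWord (hgh : g.1 ≠ h.1) :
    FreeGroup.IsCyclicallyReduced (blockWord g h n) := by
  have mem : ∀ l ∈ blockWord g h n, l = g ∨ l = h := by
    intro l hl
    simp only [blockWord, List.mem_flatMap, List.mem_append, List.mem_replicate] at hl
    tauto
  refine isCyclicallyReduced_of_forall_mem fun l hl m hm => ?_
  rcases mem l hl with rfl | rfl <;> rcases mem m hm with rfl | rfl <;> simp [hgh, hgh.symm]

end BlockWords

lemma cyclen_inv (x : F2) : cyclen x⁻¹ = cyclen x := by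
  have conj_inv_len (g : F2) : flen (g * x⁻¹ * g⁻¹) = flen (g * x * g⁻¹) := by
    rw [← conj_inv]
    exact FreeGroup.norm_inv_eq
  simp only [cyclen, conj_inv_len]

lemma exists_cyclen_eq (x : F2) : ∃ g, cyclen x = flen (g * x * g⁻¹) :=
  let ⟨g, hg⟩ := Nat.sInf_mem (Set.range_nonempty fun g : F2 => flen (g * x * g⁻¹))
  ⟨g, hg.symm⟩

lemma boundedCancellation_of_mem_closure {φ ψ : MulAut F2}
    (hφa : φ genA = genA * genB) (hφb : φ genB = genB)
    (hψa : ψ genA = genA) (hψb : ψ genB = genB * genA) {ρ : MulAut F2}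
    (hρ : ρ ∈ Submonoid.closure ({φ, ψ} : Set (MulAut F2))) :
    BoundedCancellation ρ.toMonoidHom := by
  have hφ : φ.toMonoidHom = transvection true false := by
    ext (_ | _)
    · exact hφb
    · exact hφa
  have hψ : ψ.toMonoidHom = transvection false true := by
    ext (_ | _)
    · exact hψb
    · exact hψa
  induction hρ using Submonoid.closure_induction_right with
  | one => exact boundedCancellation_id
  | mul_right ρ _ σ hσ ih =>
    change BoundedCancellation (ρ.toMonoidHom.comp σ.toMonoidHom)
    rcases hσ with rfl | rfl
    · rw [hφ]
      exact ih.comp_transvection (by decide)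
    · rw [hψ]
      exact ih.comp_transvection (by decide)

lemma wordW_eq_blockProd (n : ℕ) : wordW n = blockProd genA genB n := rfl

lemma BoundedCancellation.le_cyclen_blockProd {ρ : MulAut F2}
    (hρ : BoundedCancellation ρ.toMonoidHom) {g h : Bool × Bool} (hgh : g.1 ≠ h.1) (n : ℕ) :
    ((n * (n + 1) : ℚ) / 2 - 2 * n) * (flen (ρ genA) + flen (ρ genB)) ≤
      cyclen (ρ (blockProd (FreeGroup.mk [g]) (FreeGroup.mk [h]) n)) := by
  rw [← mk_blockWord]
  obtain ⟨c, hc⟩ := exists_cyclen_eq (ρ (FreeGroup.mk (blockWord g h n)))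
  set w : Bool → ℕ := fun x => flen (ρ (FreeGroup.of x))
  have sum_eq (f : Bool → ℕ) : f g.1 + f h.1 = f true + f false := by
    cases hg : g.1 <;> cases hh : h.1 <;> simp_all [add_comm]
  have total : ∑ x, w x = w true + w false := Fintype.sum_bool w
  have cancel : weight w (blockWord g h n) ≤ cyclen (ρ (FreeGroup.mk (blockWord g h n))) +
      2 * (w true + w false) * n := by
    rw [hc, ← total]
    refine (hρ.weight_le_norm_conj_add (isCyclicallyReduced_blockWord n hgh) c).trans ?_
    exact Nat.add_le_add_left (Nat.mul_le_mul_left _ (descents_blockWord_le g h n)) _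
  have twice := two_mul_weight_blockWord g h n w
  rw [sum_eq] at twice
  change _ * ((w true : ℚ) + w false) ≤ _
  qify at cancel twice
  linarith

theorem cyclically_reduced_length_estimate_general (n : ℕ)
    (χ ξ τ φ ψ : MulAut F2)
    (hχa : χ genA = genA) (hχb : χ genB = genB⁻¹)
    (hξa : ξ genA = genA⁻¹) (hξb : ξ genB = genB)
    (hτa : τ genA = genB) (hτb : τ genB = genA)
    (hφa : φ genA = genA * genB) (hφb : φ genB = genB)
    (hψa : ψ genA = genA) (hψb : ψ genB = genB * genA) :
    ∀ ρ ∈ Submonoid.closure ({φ, ψ} : Set (MulAut F2)),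
      ∀ z ∈ [wordW n, ξ (χ (wordW n)), ξ (wordW n), χ (wordW n),
              τ (wordW n), τ (ξ (χ (wordW n))), τ (ξ (wordW n)), τ (χ (wordW n)),
              (wordW n)⁻¹, (ξ (χ (wordW n)))⁻¹, (ξ (wordW n))⁻¹, (χ (wordW n))⁻¹,
              (τ (wordW n))⁻¹, (τ (ξ (χ (wordW n))))⁻¹, (τ (ξ (wordW n)))⁻¹,
              (τ (χ (wordW n)))⁻¹],
        ((n * (n + 1) : ℚ) / 2 - 2 * n) * (flen (ρ genA) + flen (ρ genB)) ≤
          (cyclen (ρ z) : ℚ) := by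
  intro ρ hρ
  have hA : FreeGroup.mk [(true, true)] = genA := rfl
  have hA' : FreeGroup.mk [(true, false)] = genA⁻¹ := rfl
  have hB : FreeGroup.mk [(false, true)] = genB := rfl
  have hB' : FreeGroup.mk [(false, false)] = genB⁻¹ := rfl
  have bound (g h : Bool × Bool) (hgh : g.1 ≠ h.1) :=
    (boundedCancellation_of_mem_closure hφa hφb hψa hψb hρ).le_cyclen_blockProd hgh n
  simp only [Prod.forall, Bool.forall_bool, ne_eq, not_true, reduceCtorEq, not_false_eq_true,
    IsEmpty.forall_iff, forall_const, and_self, true_and, and_true, hA, hA', hB, hB'] at bound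
  simp only [List.forall_mem_cons, wordW_eq_blockProd, map_blockProd τ, map_blockProd ξ,
    map_blockProd χ, hχa, hχb, hξa, hξb, hτa, hτb, map_inv τ, map_inv ξ, map_inv ρ, cyclen_inv]
  simp [bound]

/-- **Lemma 8.15 (estimate of cyclically reduced length).** With
`χ(a)=a, χ(b)=b⁻¹`, `ξ(a)=a⁻¹, ξ(b)=b`, `τ(a)=b, τ(b)=a`, `φ(a)=ab, φ(b)=b`,
`ψ(a)=a, ψ(b)=ba`, let `w = a b a² b² ⋯ aⁿ bⁿ` (`n > 101`), and
`w₀ = w, w₁ = ξχ(w), w₂ = ξ(w), w₃ = χ(w), w₄ = τ(w), w₅ = τξχ(w), w₆ = τξ(w), w₇ = τχ(w)`,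
`v_i = w_i⁻¹`.  Then for every `ρ ∈ Fr₊(φ,ψ)` (the monoid generated by `φ,ψ`) and every
`z ∈ {w₀,v₀,…,w₇,v₇}` one has `‖ρ(z)‖ ≥ (n(n−1)/2 − 2n)·(|ρ(a)| + |ρ(b)|)`. -/
theorem cyclically_reduced_length_estimate (n : ℕ) (hn : 101 < n)
    (χ ξ τ φ ψ : MulAut F2)
    (hχa : χ genA = genA) (hχb : χ genB = genB⁻¹)
    (hξa : ξ genA = genA⁻¹) (hξb : ξ genB = genB)
    (hτa : τ genA = genB) (hτb : τ genB = genA)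
    (hφa : φ genA = genA * genB) (hφb : φ genB = genB)
    (hψa : ψ genA = genA) (hψb : ψ genB = genB * genA) :
    ∀ ρ ∈ Submonoid.closure ({φ, ψ} : Set (MulAut F2)),
      ∀ z ∈ [wordW n, ξ (χ (wordW n)), ξ (wordW n), χ (wordW n),
              τ (wordW n), τ (ξ (χ (wordW n))), τ (ξ (wordW n)), τ (χ (wordW n)),
              (wordW n)⁻¹, (ξ (χ (wordW n)))⁻¹, (ξ (wordW n))⁻¹, (χ (wordW n))⁻¹,
              (τ (wordW n))⁻¹, (τ (ξ (χ (wordW n))))⁻¹, (τ (ξ (wordW n)))⁻¹,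
              (τ (χ (wordW n)))⁻¹],
        ((n * (n - 1) : ℚ) / 2 - 2 * n) * (flen (ρ genA) + flen (ρ genB)) ≤
          (cyclen (ρ z) : ℚ) := by
  intro ρ hρ z hz
  have constant_le : (n * (n - 1) : ℚ) / 2 - 2 * n ≤ n * (n + 1) / 2 - 2 * n := by linarith
  exact (mul_le_mul_of_nonneg_right constant_le (by positivity)).trans
    (cyclically_reduced_length_estimate_general n χ ξ τ φ ψ hχa hχb hξa hξb hτa hτb
      hφa hφb hψa hψb ρ hρ z hz)

end IRSPaper
end

section
/- Let G and H be countable discrete groups with G infinite and H nontrivial. Then the wreath product H ≀ G = (⊕_G H) ⋊ G admits a family of cardinality continuum of pairwise distinct invariant random subgroups that are all non-atomic and weakly mixing (with respect to the conjugation action of H ≀ G). -/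
open MeasureTheory

namespace IRSPaper


/-! ## The wreath product `H ≀ G = (⊕_G H) ⋊ G` -/

/-- The restricted direct product (direct sum) `⊕_G H`: the subgroup of `G → H` of finitely
supported functions. -/
def DirectSumSub (G H : Type*) [Group H] : Subgroup (G → H) where
  carrier := {f : G → H | (Function.mulSupport f).Finite}
  one_mem' := by
    simp [Function.mulSupport_one]
  mul_mem' := by
    intro f g hf hg
    exact ((Set.Finite.union hf hg).subset (Function.mulSupport_mul f g))
  inv_mem' := by
    intro f hf
    simpa [Function.mulSupport_inv] using hf

lemma shift_mem_directSumSub {G H : Type*} [Group G] [Group H]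
    (g : G) (f : ↥(DirectSumSub G H)) :
    (Function.mulSupport fun x : G => (f : G → H) (g * x)).Finite := by
  have h : (Function.mulSupport fun x : G => (f : G → H) (g * x)) =
      (fun x : G => g * x) ⁻¹' Function.mulSupport (f : G → H) :=
    Function.mulSupport_comp_eq_preimage _ _
  rw [h]
  exact Set.Finite.preimage (Set.injOn_of_injective (mul_right_injective g)) f.2

/-- The shift automorphism of `⊕_G H` associated to `g ∈ G`: `(g · f)(x) = f(g⁻¹x)`. -/
def shiftAut (G H : Type*) [Group G] [Group H] (g : G) :
    ↥(DirectSumSub G H) ≃* ↥(DirectSumSub G H) where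
  toFun f := ⟨fun x => (f : G → H) (g⁻¹ * x), shift_mem_directSumSub g⁻¹ f⟩
  invFun f := ⟨fun x => (f : G → H) (g * x), shift_mem_directSumSub g f⟩
  left_inv f := by
    apply Subtype.ext
    funext x
    simp [mul_assoc]
  right_inv f := by
    apply Subtype.ext
    funext x
    simp [mul_assoc]
  map_mul' f₁ f₂ := by
    apply Subtype.ext
    funext x
    rfl

/-- The shift action `G →* Aut(⊕_G H)`. -/
def shiftHom (G H : Type*) [Group G] [Group H] : G →* MulAut ↥(DirectSumSub G H) where
  toFun := shiftAut G H
  map_one' := by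
    apply MulEquiv.ext
    intro f
    apply Subtype.ext
    funext x
    simp [shiftAut]
  map_mul' g₁ g₂ := by
    apply MulEquiv.ext
    intro f
    apply Subtype.ext
    funext x
    simp [shiftAut, mul_assoc]

/-- The wreath product `H ≀ G = (⊕_G H) ⋊ G`. -/
def Wreath (G H : Type*) [Group G] [Group H] : Type _ :=
  SemidirectProduct ↥(DirectSumSub G H) G (shiftHom G H)

noncomputable instance (G H : Type*) [Group G] [Group H] : Group (Wreath G H) :=
  SemidirectProduct.instGroup

/-!
A random subset of `G`, each point being kept independently with probability `p`, gives the random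
subgroup of `⊕_G H` of all functions supported in it. Conjugation by `(f, g)` translates the support
by `g`, so this map from the Bernoulli shift of `G` on `2^G` to `Sub(H ≀ G)` is equivariant. It is
injective because `H` is nontrivial. The Bernoulli shift of an infinite group is weakly mixing: its
square is the Bernoulli shift over `G ⊕ G`, whose finite subsets can all be moved off themselves,
so that an invariant set, being approximated by cylinders, is independent of itself. The parameter
`p` is recovered as the probability that the random subgroup contains a given function with
one-point support.
-/

open ProbabilityTheory Function
open scoped symmDiff

/-! ### The space of subgroups -/

section SpaceOfSubgroups

variable {Γ : Type*} [Group Γ]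

lemma continuous_subgroup_iff {X : Type*} [TopologicalSpace X] {f : X → Subgroup Γ} :
    Continuous f ↔ ∀ γ, IsClopen {x | γ ∈ f x} := by
  rw [continuous_induced_rng, continuous_pi_iff]
  refine forall_congr' fun γ => ?_
  rw [continuous_bool_rng true]
  congr!
  ext x
  simp

lemma isClopen_setOf_mem_subgroup (γ : Γ) : IsClopen {K : Subgroup Γ | γ ∈ K} :=
  continuous_subgroup_iff.1 continuous_id γ

instance : T2Space (Subgroup Γ) :=
  T2Space.of_injective_continuous
    (f := fun (K : Subgroup Γ) (γ : Γ) => @decide (γ ∈ K) (Classical.dec _))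
    (fun K L h => SetLike.ext fun γ => by simpa using congrFun h γ) continuous_induced_dom

lemma mem_conjSub {d γ : Γ} {K : Subgroup Γ} : γ ∈ conjSub d K ↔ d⁻¹ * γ * d ∈ K := by
  rw [conjSub, Subgroup.mem_map_equiv, MulAut.conj_symm_apply]

lemma continuous_conjSub (d : Γ) : Continuous (conjSub d) := by
  simpa only [continuous_subgroup_iff, mem_conjSub] using
    fun γ => isClopen_setOf_mem_subgroup (d⁻¹ * γ * d)

end SpaceOfSubgroups

/-! ### Factors -/

section Factors

variable {Γ Δ α β : Type*} [MeasurableSpace α] [MeasurableSpace β] {μ : Measure α} {ν : Measure β}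
  {actα : Γ → α → α} {actβ : Δ → β → β} {f : α → β} {φ : Γ → Δ}

lemma ErgodicAct.of_measurePreserving (h : ErgodicAct actα μ) (hf : MeasurePreserving f μ ν)
    (hφ : ∀ γ, Semiconj f (actα γ) (actβ (φ γ))) : ErgodicAct actβ ν := by
  intro s hs hinv
  have hinv_preimage (γ : Γ) : actα γ ⁻¹' (f ⁻¹' s) = f ⁻¹' s := by
    rw [← Set.preimage_comp, (hφ γ).comp_eq, Set.preimage_comp, hinv]
  rw [← hf.measure_preimage hs.nullMeasurableSet,
    ← hf.measure_preimage hs.compl.nullMeasurableSet]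
  exact h _ (hf.measurable hs) hinv_preimage

lemma WeaklyMixingAct.of_measurePreserving [SFinite μ] [SFinite ν] (h : WeaklyMixingAct actα μ)
    (hf : MeasurePreserving f μ ν) (hφ : ∀ γ, Semiconj f (actα γ) (actβ (φ γ))) :
    WeaklyMixingAct actβ ν :=
  ErgodicAct.of_measurePreserving h (hf.prod hf) fun γ p => Prod.ext (hφ γ p.1) (hφ γ p.2)

lemma NonAtomicMeasure.map [MeasurableSingletonClass β] (h : NonAtomicMeasure μ)
    (hf : Measurable f) (hinj : Injective f) : NonAtomicMeasure (μ.map f) := by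
  intro y
  rw [Measure.map_apply hf (measurableSet_singleton y)]
  obtain hempty | ⟨x, hx⟩ :=
    (Set.subsingleton_singleton.preimage hinj).eq_empty_or_singleton (s := f ⁻¹' {y})
  · rw [hempty, measure_empty]
  · rw [hx, h x]

end Factors

/-! ### Infinite product measures -/

section InfiniteProducts

lemma measurePreserving_sumPiEquivProdPi_symm_infinitePi {I J : Type*} {X : I ⊕ J → Type*}
    [∀ k, MeasurableSpace (X k)] (μ : ∀ k, Measure (X k)) [∀ k, IsProbabilityMeasure (μ k)] :
    MeasurePreserving (MeasurableEquiv.sumPiEquivProdPi X).symm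
      ((Measure.infinitePi fun i => μ (.inl i)).prod (Measure.infinitePi fun j => μ (.inr j)))
      (Measure.infinitePi μ) := by
  refine ⟨MeasurableEquiv.measurable _, Measure.eq_infinitePi _ fun F t ht => ?_⟩
  have hpreimage : (MeasurableEquiv.sumPiEquivProdPi X).symm ⁻¹' Set.pi F t =
      Set.pi F.toLeft (fun i => t (.inl i)) ×ˢ Set.pi F.toRight (fun j => t (.inr j)) := by
    ext x
    simp [Set.mem_pi, MeasurableEquiv.coe_sumPiEquivProdPi_symm]
  rw [MeasurableEquiv.map_apply, hpreimage, Measure.prod_prod,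
    Measure.infinitePi_pi _ fun i _ => ht _, Measure.infinitePi_pi _ fun j _ => ht _,
    ← Finset.prod_disjSum F.toLeft F.toRight fun k => μ k (t k), Finset.toLeft_disjSum_toRight]

lemma infinitePi_singleton_eq_zero {I : Type*} [Infinite I] {X : I → Type*}
    [∀ i, MeasurableSpace (X i)] [∀ i, MeasurableSingletonClass (X i)] (μ : ∀ i, Measure (X i))
    [∀ i, IsProbabilityMeasure (μ i)] {x : ∀ i, X i} {q : ENNReal} (hq : q < 1)
    (hle : ∀ i, μ i {x i} ≤ q) : Measure.infinitePi μ {x} = 0 := by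
  have hle_pow (n : ℕ) : Measure.infinitePi μ {x} ≤ q ^ n := by
    obtain ⟨F, rfl⟩ := Infinite.exists_subset_card_eq I n
    calc Measure.infinitePi μ {x}
        ≤ Measure.infinitePi μ (Set.pi F fun i => {x i}) :=
          measure_mono (by simp [Set.mem_pi])
      _ = ∏ i ∈ F, μ i {x i} := Measure.infinitePi_pi _ fun i _ => measurableSet_singleton _
      _ ≤ q ^ F.card := Finset.prod_le_pow_card _ _ _ fun i _ => hle i
  exact le_antisymm
    (ge_of_tendsto' (ENNReal.tendsto_pow_atTop_nhds_zero_of_lt_one hq) hle_pow) zero_le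

lemma exists_lt_one_forall_measure_singleton_le {S : Type*} [MeasurableSpace S]
    [MeasurableSingletonClass S] {ρ : Measure S} [IsProbabilityMeasure ρ]
    (hρ : ∀ b, ρ {b} < 1) : ∃ q < 1, ∀ b, ρ {b} ≤ q := by
  by_cases hhalf : ∃ b, 2⁻¹ < ρ {b}
  · obtain ⟨b, hb⟩ := hhalf
    refine ⟨ρ {b}, hρ b, fun c => ?_⟩
    obtain rfl | hcb := eq_or_ne c b
    · rfl
    calc ρ {c} ≤ ρ {b}ᶜ := measure_mono (by simpa using hcb.symm)
      _ = 1 - ρ {b} := prob_compl_eq_one_sub (measurableSet_singleton b)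
      _ ≤ 1 - 2⁻¹ := by gcongr
      _ = 2⁻¹ := ENNReal.one_sub_inv_two
      _ ≤ ρ {b} := hb.le
  · push Not at hhalf
    exact ⟨2⁻¹, ENNReal.one_half_lt_one, hhalf⟩

lemma nonAtomicMeasure_infinitePi {I S : Type*} [Infinite I] [MeasurableSpace S]
    [MeasurableSingletonClass S] {ρ : Measure S} [IsProbabilityMeasure ρ]
    (hρ : ∀ b, ρ {b} < 1) : NonAtomicMeasure (Measure.infinitePi fun _ : I => ρ) := by
  obtain ⟨q, hq, hle⟩ := exists_lt_one_forall_measure_singleton_le hρ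
  exact fun x => infinitePi_singleton_eq_zero _ hq fun i => hle (x i)

end InfiniteProducts

/-! ### Bernoulli shifts -/

lemma inter_symmDiff_inter_subset {Ω : Type*} (s t u v : Set Ω) :
    (s ∩ t) ∆ (u ∩ v) ⊆ s ∆ u ∪ t ∆ v := by
  intro x
  simp only [Set.mem_symmDiff, Set.mem_inter_iff, Set.mem_union]
  tauto

lemma abs_measureReal_inter_sub_mul_le_of_indepSet {Ω : Type*} [MeasurableSpace Ω]
    {μ : Measure Ω} [IsProbabilityMeasure μ] {s t C D : Set Ω} (hs : MeasurableSet s)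
    (ht : MeasurableSet t) (hC : MeasurableSet C) (hD : MeasurableSet D) (hCD : IndepSet C D μ) :
    |μ.real (s ∩ t) - μ.real s * μ.real t| ≤ 2 * (μ.real (C ∆ s) + μ.real (D ∆ t)) := by
  have hCs : |μ.real C - μ.real s| ≤ μ.real (C ∆ s) :=
    abs_measureReal_sub_le_measureReal_symmDiff hC.nullMeasurableSet hs.nullMeasurableSet
  have hDt : |μ.real D - μ.real t| ≤ μ.real (D ∆ t) :=
    abs_measureReal_sub_le_measureReal_symmDiff hD.nullMeasurableSet ht.nullMeasurableSet
  have hinter : |μ.real (C ∩ D) - μ.real (s ∩ t)| ≤ μ.real (C ∆ s) + μ.real (D ∆ t) :=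
    calc |μ.real (C ∩ D) - μ.real (s ∩ t)|
        ≤ μ.real ((C ∩ D) ∆ (s ∩ t)) := abs_measureReal_sub_le_measureReal_symmDiff
          (hC.inter hD).nullMeasurableSet (hs.inter ht).nullMeasurableSet
      _ ≤ μ.real (C ∆ s ∪ D ∆ t) := measureReal_mono (inter_symmDiff_inter_subset C D s t)
      _ ≤ μ.real (C ∆ s) + μ.real (D ∆ t) := measureReal_union_le _ _
  have hprod : |μ.real C * μ.real D - μ.real s * μ.real t| ≤ μ.real (C ∆ s) + μ.real (D ∆ t) :=
    calc |μ.real C * μ.real D - μ.real s * μ.real t|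
        = |(μ.real C - μ.real s) * μ.real D + μ.real s * (μ.real D - μ.real t)| := by ring_nf
      _ ≤ |μ.real C - μ.real s| * μ.real D + μ.real s * |μ.real D - μ.real t| := by
        refine (abs_add_le _ _).trans_eq ?_
        simp only [abs_mul, abs_of_nonneg measureReal_nonneg]
      _ ≤ μ.real (C ∆ s) * 1 + 1 * μ.real (D ∆ t) := by
        gcongr <;> exact measureReal_le_one
      _ = μ.real (C ∆ s) + μ.real (D ∆ t) := by ring
  have hCD_real : μ.real (C ∩ D) = μ.real C * μ.real D := by
    simp only [measureReal_def, hCD.measure_inter_eq_mul, ENNReal.toReal_mul]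
  rw [hCD_real] at hinter
  calc |μ.real (s ∩ t) - μ.real s * μ.real t|
      ≤ |μ.real (s ∩ t) - μ.real C * μ.real D| + |μ.real C * μ.real D - μ.real s * μ.real t| :=
        abs_sub_le _ _ _
    _ ≤ 2 * (μ.real (C ∆ s) + μ.real (D ∆ t)) := by rw [abs_sub_comm]; linarith

lemma indepSet_of_forall_approx {Ω : Type*} [MeasurableSpace Ω] {μ : Measure Ω}
    [IsProbabilityMeasure μ] {s t : Set Ω} (hs : MeasurableSet s) (ht : MeasurableSet t)
    (happrox : ∀ ε > 0, ∃ C D, MeasurableSet C ∧ MeasurableSet D ∧ IndepSet C D μ ∧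
      μ.real (C ∆ s) ≤ ε ∧ μ.real (D ∆ t) ≤ ε) : IndepSet s t μ := by
  have hclose (δ : ℝ) (hδ : 0 < δ) : |μ.real (s ∩ t) - μ.real s * μ.real t| ≤ δ := by
    obtain ⟨C, D, hC, hD, hCD, hCs, hDt⟩ := happrox (δ / 4) (by positivity)
    linarith [abs_measureReal_inter_sub_mul_le_of_indepSet hs ht hC hD hCD]
  have hreal : μ.real (s ∩ t) = μ.real s * μ.real t :=
    eq_of_abs_sub_nonpos (le_of_forall_pos_le_add fun δ hδ => by simpa using hclose δ hδ)
  rw [indepSet_iff_measure_inter_eq_mul hs ht μ,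
    ← ENNReal.toReal_eq_toReal_iff' (by finiteness) (by finiteness), ENNReal.toReal_mul]
  exact hreal

section BernoulliShift

variable {G I S : Type*} [Group G] [MulAction G I]

/-- The shift action of `G` on `S`-valued configurations over a `G`-set `I`, that is the formula of
`arrowAction`. With the product measure on `I → S` it is the generalized Bernoulli shift. -/
def bernoulliShift (g : G) (x : I → S) : I → S :=
  fun i => x (g⁻¹ • i)

variable (G I) in
/-- Every finite subset of the `G`-set `I` can be moved off itself. -/
def DisplacesFinsets : Prop :=
  ∀ F : Finset I, ∃ g : G, ∀ i ∈ F, g • i ∉ F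

lemma displacesFinsets_self [Infinite G] : DisplacesFinsets G G := by
  classical
  intro F
  obtain ⟨g, hg⟩ := Infinite.exists_notMem_finset (F.image₂ (· / ·) F)
  refine ⟨g, fun i hi hgi => hg ?_⟩
  simpa using Finset.mem_image₂_of_mem (f := (· / ·)) hgi hi

lemma DisplacesFinsets.sum_self (h : DisplacesFinsets G I) : DisplacesFinsets G (I ⊕ I) := by
  classical
  intro F
  obtain ⟨g, hg⟩ := h (F.image (Sum.elim id id))
  refine ⟨g, fun k hk hgk => hg _ (Finset.mem_image_of_mem _ hk) ?_⟩
  convert Finset.mem_image_of_mem (Sum.elim id id) hgk using 1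
  cases k <;> rfl

variable [MeasurableSpace S] (ρ : Measure S) [IsProbabilityMeasure ρ]

lemma measurePreserving_bernoulliShift (g : G) :
    MeasurePreserving (bernoulliShift (I := I) g)
      (Measure.infinitePi fun _ => ρ) (Measure.infinitePi fun _ => ρ) where
  measurable := by unfold bernoulliShift; fun_prop
  map_eq := Measure.map_infinitePi_infinitePi_of_inj (P := fun _ : I => ρ) (MulAction.injective g⁻¹)

lemma indepFun_restrict_restrict_bernoulliShift {F : Finset I} {g : G} (hg : ∀ i ∈ F, g • i ∉ F) :
    IndepFun F.restrict (fun x : I → S => F.restrict (bernoulliShift g x))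
      (Measure.infinitePi fun _ => ρ) := by
  let F' : Finset I := F.map (MulAction.toPerm g⁻¹).toEmbedding
  have hF' (i : F) : g⁻¹ • (i : I) ∈ F' := Finset.mem_map_of_mem _ i.2
  have hdisjoint : Disjoint F F' := by
    rw [Finset.disjoint_left]
    intro i hi hi'
    obtain ⟨j, hj, rfl⟩ := Finset.mem_map.1 hi'
    exact hg _ hi (by simpa using hj)
  have hindep : iIndepFun (fun i (x : I → S) => x i) (Measure.infinitePi fun _ => ρ) :=
    iIndepFun_infinitePi (X := fun _ => id) fun _ => measurable_id
  exact (hindep.indepFun_finset F F' hdisjoint fun i => measurable_pi_apply i).comp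
    (φ := id) (ψ := fun y (i : F) => y ⟨g⁻¹ • (i : I), hF' i⟩) measurable_id (by fun_prop)

lemma exists_indepSet_approx_of_bernoulliShift_invariant (hI : DisplacesFinsets G I)
    {s : Set (I → S)} (hs : MeasurableSet s) (hinv : ∀ g : G, bernoulliShift g ⁻¹' s = s)
    {ε : ℝ} (hε : 0 < ε) :
    ∃ C D, MeasurableSet C ∧ MeasurableSet D ∧ IndepSet C D (Measure.infinitePi fun _ : I => ρ) ∧
      (Measure.infinitePi fun _ : I => ρ).real (C ∆ s) ≤ ε ∧
      (Measure.infinitePi fun _ : I => ρ).real (D ∆ s) ≤ ε := by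
  set μ := Measure.infinitePi fun _ : I => ρ
  obtain ⟨C, hC, hCs⟩ := exists_measure_symmDiff_lt_of_generateFrom_isSetRing (μ := μ)
    (isSetRing_measurableCylinders (α := fun _ : I => S))
    ⟨{Set.univ}, by simp, by simpa using univ_mem_measurableCylinders fun _ : I => S, by simp⟩
    generateFrom_measurableCylinders.symm hs (ENNReal.ofReal_pos.mpr hε)
  have hCmeas : MeasurableSet C := .of_mem_measurableCylinders hC
  obtain ⟨F, B, hB, rfl⟩ := (mem_measurableCylinders C).1 hC
  obtain ⟨g, hg⟩ := hI F
  have hshift := measurePreserving_bernoulliShift (I := I) ρ g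
  have hCs_real : μ.real (cylinder F B ∆ s) ≤ ε := ENNReal.toReal_le_of_le_ofReal hε.le hCs.le
  refine ⟨cylinder F B, bernoulliShift g ⁻¹' cylinder F B, hCmeas, hshift.measurable hCmeas, ?_,
    hCs_real, ?_⟩
  · exact (indepFun_iff_indepSet_preimage (Finset.measurable_restrict F)
      ((Finset.measurable_restrict F).comp hshift.measurable)).1
      (indepFun_restrict_restrict_bernoulliShift ρ hg) B B hB hB
  · calc μ.real ((bernoulliShift g ⁻¹' cylinder F B) ∆ s)
        = μ.real (bernoulliShift g ⁻¹' (cylinder F B ∆ s)) := by rw [Set.preimage_symmDiff, hinv]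
      _ = μ.real (cylinder F B ∆ s) :=
        hshift.measureReal_preimage (hCmeas.symmDiff hs).nullMeasurableSet
      _ ≤ ε := hCs_real

theorem ergodicAct_bernoulliShift (hI : DisplacesFinsets G I) :
    ErgodicAct (bernoulliShift (G := G)) (Measure.infinitePi fun _ : I => ρ) := by
  intro s hs hinv
  have hindep : IndepSet s s (Measure.infinitePi fun _ : I => ρ) :=
    indepSet_of_forall_approx hs hs fun ε hε =>
      exists_indepSet_approx_of_bernoulliShift_invariant ρ hI hs hinv hε
  rw [prob_compl_eq_zero_iff hs]
  exact measure_eq_zero_or_one_of_indepSet_self hindep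

theorem weaklyMixingAct_bernoulliShift (hI : DisplacesFinsets G I) :
    WeaklyMixingAct (bernoulliShift (G := G)) (Measure.infinitePi fun _ : I => ρ) :=
  (ergodicAct_bernoulliShift ρ hI.sum_self).of_measurePreserving (φ := id)
    (measurePreserving_sumPiEquivProdPi_symm_infinitePi fun _ => ρ).symm
    fun _ _ => rfl

end BernoulliShift

/-! ### Supported subgroups of wreath products -/

namespace Wreath

variable {G H : Type*} [Group G] [Group H]

/-- The projection `H ≀ G → G`. -/
def rightHom : Wreath G H →* G :=
  SemidirectProduct.rightHom

/-- The `⊕_G H`-component of an element of `H ≀ G`, as a function `G → H`. -/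
def base (w : Wreath G H) : G → H :=
  ((SemidirectProduct.left w : DirectSumSub G H) : G → H)

lemma finite_mulSupport_base (w : Wreath G H) : (mulSupport w.base).Finite :=
  (SemidirectProduct.left w : DirectSumSub G H).2

lemma base_mul_apply (v w : Wreath G H) (i : G) :
    (v * w).base i = v.base i * w.base ((rightHom v)⁻¹ * i) :=
  rfl

lemma base_inv_apply (w : Wreath G H) (i : G) : w⁻¹.base i = (w.base (rightHom w * i))⁻¹ := by
  rw [eq_inv_iff_mul_eq_one]
  have hbase : (w⁻¹ * w).base i = 1 := by rw [inv_mul_cancel]; rfl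
  simpa only [base_mul_apply, map_inv, inv_inv] using hbase

lemma rightHom_inv_mul_mul_eq_one_iff {d w : Wreath G H} :
    rightHom (d⁻¹ * w * d) = 1 ↔ rightHom w = 1 := by
  simpa only [map_mul, map_inv, inv_inv] using conj_eq_one_iff (a := (rightHom d)⁻¹)

lemma base_inv_mul_mul_apply_eq_one_iff {d w : Wreath G H} (hw : rightHom w = 1) {i : G} :
    (d⁻¹ * w * d).base i = 1 ↔ w.base (rightHom d * i) = 1 := by
  simpa only [base_mul_apply, base_inv_apply, map_mul, map_inv, hw, mul_one, inv_inv] using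
    conj_eq_one_iff (a := (d.base (rightHom d * i))⁻¹)

/-- The element of `⊕_G H ≤ H ≀ G` with value `h` at `i` and `1` elsewhere. -/
noncomputable def single (i : G) (h : H) : Wreath G H :=
  open scoped Classical in
  SemidirectProduct.inl
    ⟨Pi.mulSingle i h, (Set.finite_singleton i).subset Pi.mulSupport_mulSingle_subset⟩

lemma rightHom_single (i : G) (h : H) : rightHom (single i h) = 1 :=
  rfl

lemma mulSupport_base_single (i : G) {h : H} (hh : h ≠ 1) :
    mulSupport (single i h).base = {i} :=
  open scoped Classical in
  Pi.mulSupport_mulSingle_of_ne hh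

end Wreath

section SupportedSubgroup

open Wreath

variable {G H : Type*} [Group G] [Group H]

variable (H) in
/-- The subgroup of `⊕_G H ≤ H ≀ G` of functions supported in a subset of `G`, the subset being
given by its indicator function `x`. -/
def supportedSubgroup (x : G → Bool) : Subgroup (Wreath G H) where
  carrier := {w | rightHom w = 1 ∧ ∀ i ∈ mulSupport w.base, x i = true}
  one_mem' := ⟨map_one _, fun _ hi => (hi rfl).elim⟩
  mul_mem' {v w} := by
    rintro ⟨hv, hvx⟩ ⟨hw, hwx⟩
    refine ⟨by rw [map_mul, hv, hw, one_mul], fun i hi => ?_⟩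
    rw [mem_mulSupport, base_mul_apply, hv, inv_one, one_mul] at hi
    by_cases hvi : v.base i = 1
    · exact hwx i (by rwa [hvi, one_mul] at hi)
    · exact hvx i hvi
  inv_mem' {w} := by
    rintro ⟨hw, hwx⟩
    refine ⟨by rw [map_inv, hw, inv_one], fun i hi => hwx i ?_⟩
    rwa [mem_mulSupport, base_inv_apply, hw, one_mul, inv_ne_one] at hi

lemma mem_supportedSubgroup {x : G → Bool} {w : Wreath G H} :
    w ∈ supportedSubgroup H x ↔ rightHom w = 1 ∧ ∀ i ∈ mulSupport w.base, x i = true :=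
  Iff.rfl

lemma single_mem_supportedSubgroup {i : G} {h : H} (hh : h ≠ 1) {x : G → Bool} :
    single i h ∈ supportedSubgroup H x ↔ x i = true := by
  simp [mem_supportedSubgroup, rightHom_single, mulSupport_base_single i hh]

lemma supportedSubgroup_injective [Nontrivial H] : Injective (supportedSubgroup (G := G) H) := by
  obtain ⟨h, hh⟩ := exists_ne (1 : H)
  intro x y hxy
  ext i
  rw [Bool.eq_iff_iff, ← single_mem_supportedSubgroup hh, hxy, single_mem_supportedSubgroup hh]

lemma continuous_supportedSubgroup : Continuous (supportedSubgroup (G := G) H) := by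
  refine continuous_subgroup_iff.2 fun w => ?_
  have hclopen : IsClopen (⋂ i ∈ mulSupport w.base, {x : G → Bool | x i = true}) :=
    w.finite_mulSupport_base.isClopen_biInter fun i _ =>
      (isClopen_discrete {true}).preimage (continuous_apply i)
  by_cases hw : rightHom w = 1
  · simpa [mem_supportedSubgroup, hw, Set.iInter_ofPred] using hclopen
  · simp [mem_supportedSubgroup, hw, isClopen_empty]

lemma conjSub_supportedSubgroup (d : Wreath G H) (x : G → Bool) :
    conjSub d (supportedSubgroup H x) = supportedSubgroup H (bernoulliShift (rightHom d) x) := by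
  ext w
  rw [mem_conjSub, mem_supportedSubgroup, mem_supportedSubgroup, rightHom_inv_mul_mul_eq_one_iff]
  refine and_congr_right fun hw => (Equiv.mulLeft (rightHom d)).forall_congr fun {i} => ?_
  simp only [mem_mulSupport, ne_eq, base_inv_mul_mul_apply_eq_one_iff hw, Equiv.coe_mulLeft,
    bernoulliShift, smul_eq_mul, inv_mul_cancel_left]

end SupportedSubgroup

/-! ### Bernoulli invariant random subgroups -/

lemma bernoulliMeasure_singleton_lt_one {S : Type*} [MeasurableSpace S]
    [MeasurableSingletonClass S] {a b : S} (hab : a ≠ b) {p : unitInterval} (hp₀ : 0 < p)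
    (hp₁ : p < 1) (c : S) : bernoulliMeasure a b p {c} < 1 := by
  have hc : MeasurableSet {c} := measurableSet_singleton c
  by_cases hca : c = a
  · subst hca
    rw [bernoulliMeasure_apply_of_mem_of_notMem p hc rfl (by simpa using hab.symm),
      ENNReal.coe_lt_one_iff]
    exact hp₁
  by_cases hcb : c = b
  · subst hcb
    rw [bernoulliMeasure_apply_of_notMem_of_mem p hc (by simpa using hab) rfl,
      ENNReal.coe_lt_one_iff]
    exact unitInterval.symm_lt_comm.2 (by rwa [unitInterval.symm_one])
  · rw [bernoulliMeasure_apply_of_notMem_of_notMem p hc (Ne.symm hca) (Ne.symm hcb)]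
    exact zero_lt_one

section BernoulliIRS

variable (G H : Type*) [Group G] [Group H]

/-- The law of the subgroup of functions supported in a random subset of `G` that contains each
point independently with probability `p`. -/
noncomputable def bernoulliIRS (p : unitInterval) : Measure (Subgroup (Wreath G H)) :=
  (Measure.infinitePi fun _ : G => bernoulliMeasure true false p).map (supportedSubgroup H)

variable [Countable G]

lemma measurePreserving_supportedSubgroup (p : unitInterval) :
    MeasurePreserving (supportedSubgroup H)
      (Measure.infinitePi fun _ : G => bernoulliMeasure true false p) (bernoulliIRS G H p) :=
  continuous_supportedSubgroup.measurable.measurePreserving _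

instance (p : unitInterval) : IsProbabilityMeasure (bernoulliIRS G H p) :=
  Measure.isProbabilityMeasure_map continuous_supportedSubgroup.measurable.aemeasurable

theorem isIRS_bernoulliIRS (p : unitInterval) : IsIRS (bernoulliIRS G H p) := by
  refine ⟨inferInstance, fun d => ?_⟩
  have hφ := measurePreserving_supportedSubgroup G H p
  have hshift := measurePreserving_bernoulliShift (I := G) (bernoulliMeasure true false p)
    (Wreath.rightHom d)
  have hequiv : supportedSubgroup H ∘ bernoulliShift (Wreath.rightHom d) =
      conjSub d ∘ supportedSubgroup H := funext fun x => (conjSub_supportedSubgroup d x).symm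
  rw [bernoulliIRS, Measure.map_map (continuous_conjSub d).measurable hφ.measurable, ← hequiv]
  exact (hφ.comp hshift).map_eq

theorem nonAtomicMeasure_bernoulliIRS [Infinite G] [Nontrivial H] {p : unitInterval} (hp₀ : 0 < p)
    (hp₁ : p < 1) : NonAtomicMeasure (bernoulliIRS G H p) :=
  (nonAtomicMeasure_infinitePi (bernoulliMeasure_singleton_lt_one (by decide) hp₀ hp₁)).map
    continuous_supportedSubgroup.measurable supportedSubgroup_injective

theorem weaklyMixingAct_bernoulliIRS [Infinite G] (p : unitInterval) :
    WeaklyMixingAct (fun (d : Wreath G H) K => conjSub d K) (bernoulliIRS G H p) :=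
  (weaklyMixingAct_bernoulliShift _ displacesFinsets_self).of_measurePreserving
    (measurePreserving_supportedSubgroup G H p)
    (φ := fun g => (SemidirectProduct.inr g : Wreath G H))
    fun g x => (conjSub_supportedSubgroup (SemidirectProduct.inr g : Wreath G H) x).symm

lemma bernoulliIRS_setOf_single_mem (p : unitInterval) (i : G) {h : H} (hh : h ≠ 1) :
    bernoulliIRS G H p {K | Wreath.single i h ∈ K} = unitInterval.toNNReal p := by
  rw [← (measurePreserving_supportedSubgroup G H p).measure_preimage
    (isClopen_setOf_mem_subgroup _).isOpen.measurableSet.nullMeasurableSet]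
  have hpreimage : supportedSubgroup H ⁻¹' {K | Wreath.single i h ∈ K} =
      (fun x : G → Bool => x i) ⁻¹' {true} := by
    ext x
    simp [single_mem_supportedSubgroup hh]
  rw [hpreimage, (measurePreserving_eval_infinitePi _ i).measure_preimage
    (measurableSet_singleton true).nullMeasurableSet]
  simp

theorem bernoulliIRS_injective [Nontrivial H] : Injective (bernoulliIRS G H) := by
  obtain ⟨h, hh⟩ := exists_ne (1 : H)
  intro p q hpq
  have hprob := bernoulliIRS_setOf_single_mem G H p 1 hh
  rw [hpq, bernoulliIRS_setOf_single_mem G H q 1 hh, ENNReal.coe_inj] at hprob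
  exact Subtype.ext (congrArg NNReal.toReal hprob).symm

end BernoulliIRS

theorem wreath_continuum_many_IRS_general (G H : Type*) [Group G] [Group H]
    [Countable G] [Infinite G] [Nontrivial H] :
    ∃ ν : ℝ → Measure (Subgroup (Wreath G H)),
      (∀ r : ℝ, IsIRS (ν r)) ∧
      (∀ r : ℝ, NonAtomicMeasure (ν r)) ∧
      (∀ r : ℝ, WeaklyMixingAct
        (fun (d : Wreath G H) (K : Subgroup (Wreath G H)) => conjSub d K) (ν r)) ∧
      Function.Injective ν :=
  ⟨fun r => bernoulliIRS G H (unitInterval.sigmoid r),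
    fun _ => isIRS_bernoulliIRS G H _,
    fun r => nonAtomicMeasure_bernoulliIRS G H (unitInterval.sigmoid_pos r)
      (unitInterval.sigmoid_lt_one r),
    fun _ => weaklyMixingAct_bernoulliIRS G H _,
    (bernoulliIRS_injective G H).comp unitInterval.sigmoid_injective⟩

/-- **Continuum many non-atomic weakly mixing IRSs on wreath products (Section 8.B (1)).**
For `G` infinite countable and `H` non-trivial countable, the wreath product
`H ≀ G = (⊕_G H) ⋊ G` admits continuum many pairwise distinct invariant random subgroups
which are all non-atomic and weakly mixing. -/
theorem wreath_continuum_many_IRS (G H : Type*) [Group G] [Group H]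
    [Countable G] [Countable H] [Infinite G] [Nontrivial H] :
    ∃ ν : ℝ → Measure (Subgroup (Wreath G H)),
      (∀ r : ℝ, IsIRS (ν r)) ∧
      (∀ r : ℝ, NonAtomicMeasure (ν r)) ∧
      (∀ r : ℝ, WeaklyMixingAct
        (fun (d : Wreath G H) (K : Subgroup (Wreath G H)) => conjSub d K) (ν r)) ∧
      Function.Injective ν :=
  wreath_continuum_many_IRS_general G H

end IRSPaper
end
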